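/- arXiv:1107.1639 — 3 statements merged into one kernel-verified Lean document; each statement's English description precedes it below -/
import Mathlib

section
/- The left A-module E' is 0-injective if and only if it is an injective A-module. Equivalently: over the Noetherian ring A, the left A-module E' is injective if and only if for every exact sequence A^{1×k_1} →(•P_1) A^{1×k_2} →(•P_2) A^{1×k_3} of right A-modules, where P_1 ∈ A^{k_1×k_2} and P_2 ∈ A^{k_2×k_3}, the sequence (E')^{k_3} →(P_2•) (E')^{k_2} →(P_1•) (E')^{k_1} obtained by applying Hom_A(−, E') is exact. -/
/-- Right multiplication `x ↦ x P` by the matrix `P ∈ A^{q×r}` on row vectors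
`x ∈ A^{1×q}`: `(x P) j = ∑ i, x i * P i j`. -/
def rmulA {A : Type*} [Ring A] {q r : ℕ} (P : Matrix (Fin q) (Fin r) A) :
    (Fin q → A) → (Fin r → A) :=
  fun x j => ∑ i, x i * P i j

/-- Right multiplication `x ↦ x P` by the matrix `P ∈ A^{q×r}` on row vectors
`x ∈ E^{1×q}` with entries in a right `A`-module `E` (the right action of `A` on `E`
being encoded as a left `Aᵐᵒᵖ`-action): `(x P) j = ∑ i, x i • P i j`. -/
def rmulE {A E : Type*} [Ring A] [AddCommGroup E] [Module Aᵐᵒᵖ E] {q r : ℕ}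
    (P : Matrix (Fin q) (Fin r) A) : (Fin q → E) → (Fin r → E) :=
  fun x j => ∑ i, MulOpposite.op (P i j) • x i

/-- Left multiplication `x' ↦ P x'` by the matrix `P ∈ A^{q×r}` on column vectors
`x' ∈ (E')^r` with entries in a left `A`-module `E'`: `(P x') i = ∑ j, P i j • x' j`. -/
def lmulE' {A E' : Type*} [Ring A] [AddCommGroup E'] [Module A E'] {q r : ℕ}
    (P : Matrix (Fin q) (Fin r) A) : (Fin r → E') → (Fin q → E') :=
  fun x' i => ∑ j, P i j • x' j

/-- The weak topology on `X` determined by a pairing `B : X → Y → 𝕜`,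
i.e. the coarsest topology making every map `x ↦ B x y` (`y ∈ Y`) continuous. -/
noncomputable def weakTopology {𝕜 X Y : Type*} [TopologicalSpace 𝕜]
    (B : X → Y → 𝕜) : TopologicalSpace X :=
  TopologicalSpace.induced B Pi.topologicalSpace

/-- Flatness of the right `A`-module `E` (`A` not necessarily commutative), expressed
by the standard equational criterion: every relation `∑ i, x i • a i = 0` in `E`
comes from relations in `A`. -/
def RightFlat (A E : Type*) [Ring A] [AddCommGroup E] [Module Aᵐᵒᵖ E] : Prop :=
  ∀ (q : ℕ) (a : Fin q → A) (x : Fin q → E),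
    ∑ i, MulOpposite.op (a i) • x i = 0 →
    ∃ (r : ℕ) (y : Fin r → E) (Q : Matrix (Fin r) (Fin q) A),
      (∀ j, ∑ i, Q j i * a i = 0) ∧ ∀ i, x i = ∑ j, MulOpposite.op (Q j i) • y j

/-!
Sending a column vector `y ∈ E^q` to the functional `x ↦ ∑ i, x i • y i` identifies `E^q` with
`Hom_A(A^{1×q}, E)` and turns `P •` into precomposition with `• P`, so `0`-injectivity says that
`Hom_A(-, E)` preserves exactness of sequences of finite free modules. An injective `E` has this
property for all exact sequences. Conversely, a finite free presentation of a left ideal `I`,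
continued by the inclusion `I ⊆ A`, is such a sequence, and exactness after applying `Hom_A(-, E)`
extends every `I → E` to `A`; over a Noetherian ring this is Baer's criterion.
-/

universe u v

section Matrices

variable {A E : Type*} [Ring A] [AddCommGroup E] [Module A E]

variable (A E) in
/-- The additive equivalence `E^q ≃ Hom_A(A^{1×q}, E)` sending a column vector `y` to the
functional `x ↦ ∑ i, x i • y i`; additive only, as `A` need not be commutative. -/
noncomputable def columnEquivHom (q : ℕ) :
    (Fin q → E) ≃+ ((Fin q → A) →ₗ[A] E) :=
  ((Pi.basisFun A (Fin q)).constr ℤ).toAddEquiv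

theorem columnEquivHom_apply {q : ℕ} (y : Fin q → E) (x : Fin q → A) :
    columnEquivHom A E q y x = ∑ i, x i • y i := by
  simp [columnEquivHom, Module.Basis.constr_apply_fintype]

theorem columnEquivHom_lmulE' {q r : ℕ} (P : Matrix (Fin q) (Fin r) A) (y : Fin r → E) :
    columnEquivHom A E q (lmulE' P y) = columnEquivHom A E r y ∘ₗ P.vecMulLinear := by
  ext x
  simp [columnEquivHom_apply, lmulE', Pi.single_apply]

theorem exact_lmulE'_iff_exact_comp {k₁ k₂ k₃ : ℕ}
    (P₁ : Matrix (Fin k₁) (Fin k₂) A) (P₂ : Matrix (Fin k₂) (Fin k₃) A) :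
    Function.Exact (lmulE' (E' := E) P₂) (lmulE' (E' := E) P₁) ↔
      Function.Exact (fun φ : (Fin k₃ → A) →ₗ[A] E ↦ φ ∘ₗ P₂.vecMulLinear)
        (fun φ : (Fin k₂ → A) →ₗ[A] E ↦ φ ∘ₗ P₁.vecMulLinear) := by
  refine (columnEquivHom A E k₂).toEquiv.forall_congr fun y ↦ iff_congr ?_ ?_
  · change _ ↔ columnEquivHom A E k₂ y ∘ₗ P₁.vecMulLinear = 0
    rw [← columnEquivHom_lmulE', EmbeddingLike.map_eq_zero_iff]
  · refine (columnEquivHom A E k₃).toEquiv.exists_congr fun z ↦ ?_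
    change _ ↔ columnEquivHom A E k₃ z ∘ₗ P₂.vecMulLinear = columnEquivHom A E k₂ y
    rw [← columnEquivHom_lmulE', EmbeddingLike.apply_eq_iff_eq]

variable (A E) in
/-- `0`-injectivity of a left `A`-module `E`: every exact sequence of row spaces
`A^{1×k₁} → A^{1×k₂} → A^{1×k₃}` given by matrices `P₁`, `P₂` induces an exact sequence
`E^{k₃} → E^{k₂} → E^{k₁}`. -/
def ZeroInjective : Prop :=
  ∀ (k₁ k₂ k₃ : ℕ) (P₁ : Matrix (Fin k₁) (Fin k₂) A) (P₂ : Matrix (Fin k₂) (Fin k₃) A),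
    Function.Exact (rmulA P₁) (rmulA P₂) →
    Function.Exact (lmulE' (E' := E) P₂) (lmulE' (E' := E) P₁)

theorem zeroInjective_iff_exact_comp :
    ZeroInjective A E ↔
      ∀ (k₁ k₂ k₃ : ℕ) (f : (Fin k₁ → A) →ₗ[A] (Fin k₂ → A))
        (g : (Fin k₂ → A) →ₗ[A] (Fin k₃ → A)), Function.Exact f g →
        Function.Exact (fun φ : (Fin k₃ → A) →ₗ[A] E ↦ φ ∘ₗ g)
          (fun φ : (Fin k₂ → A) →ₗ[A] E ↦ φ ∘ₗ f) := by
  refine forall₃_congr fun k₁ k₂ k₃ ↦ ?_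
  refine Matrix.toLinearMapRight'.toEquiv.forall_congr fun P₁ ↦ ?_
  refine Matrix.toLinearMapRight'.toEquiv.forall_congr fun P₂ ↦ ?_
  -- `rmulA P` is definitionally the function underlying `P.toLinearMapRight'`.
  exact imp_congr Iff.rfl (exact_lmulE'_iff_exact_comp P₁ P₂)

end Matrices

section Injectivity

variable {A E : Type*} [Ring A] [AddCommGroup E] [Module A E]
  {M N P : Type*} [AddCommGroup M] [Module A M] [AddCommGroup N] [Module A N]
  [AddCommGroup P] [Module A P]

theorem exact_comp_of_baer (hE : Module.Baer A E) {f : M →ₗ[A] N} {g : N →ₗ[A] P}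
    (hfg : Function.Exact f g) :
    Function.Exact (fun φ : P →ₗ[A] E ↦ φ ∘ₗ g) (fun φ : N →ₗ[A] E ↦ φ ∘ₗ f) := by
  intro φ
  constructor
  · intro (hφ : φ ∘ₗ f = 0)
    have ker_le : LinearMap.ker g ≤ LinearMap.ker φ :=
      hfg.linearMap_ker_eq.trans_le (LinearMap.range_le_ker_iff.2 hφ)
    have injective_lift : Function.Injective ((LinearMap.ker g).liftQ g le_rfl) :=
      LinearMap.ker_eq_bot.1 (Submodule.ker_liftQ_eq_bot _ _ _ le_rfl)
    obtain ⟨ψ, hψ⟩ := hE.extension_property _ injective_lift ((LinearMap.ker g).liftQ φ ker_le)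
    refine ⟨ψ, LinearMap.ext fun x ↦ ?_⟩
    simpa using LinearMap.congr_fun hψ (Submodule.Quotient.mk x)
  · rintro ⟨ψ, rfl⟩
    change (ψ ∘ₗ g) ∘ₗ f = 0
    rw [LinearMap.comp_assoc, hfg.linearMap_comp_eq_zero, LinearMap.comp_zero]

theorem zeroInjective_of_baer (hE : Module.Baer A E) : ZeroInjective A E :=
  zeroInjective_iff_exact_comp.2 fun _ _ _ _ _ ↦ exact_comp_of_baer hE

namespace ZeroInjective

theorem exists_extension_pi (hE : ZeroInjective A E) [Module.FinitePresentation A N] {k : ℕ}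
    {i : N →ₗ[A] (Fin k → A)} (hi : Function.Injective i) (g : N →ₗ[A] E) :
    ∃ g' : (Fin k → A) →ₗ[A] E, g' ∘ₗ i = g := by
  obtain ⟨n, m, π, f, hπ, hf⟩ := Module.FinitePresentation.exists_fin' A N
  have hfi : Function.Exact f (i ∘ₗ π) := hi.comp_exact_iff_exact.2 hf
  have hgf : (g ∘ₗ π) ∘ₗ f = 0 := by
    rw [LinearMap.comp_assoc, hf.linearMap_comp_eq_zero, LinearMap.comp_zero]
  obtain ⟨g', hg'⟩ := (zeroInjective_iff_exact_comp.1 hE m n k f _ hfi (g ∘ₗ π)).1 hgf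
  exact ⟨g', (LinearMap.cancel_right hπ).1 hg'⟩

theorem exists_extension (hE : ZeroInjective A E) [Module.FinitePresentation A N]
    [Module.Finite A P] [Module.Projective A P]
    {i : N →ₗ[A] P} (hi : Function.Injective i) (g : N →ₗ[A] E) :
    ∃ g' : P →ₗ[A] E, g' ∘ₗ i = g := by
  obtain ⟨n, -, j, -, hj, -⟩ := Module.Finite.exists_comp_eq_id_of_projective A P
  obtain ⟨g', hg'⟩ := hE.exists_extension_pi (i := j ∘ₗ i) (hj.comp hi) g
  exact ⟨g' ∘ₗ j, hg'⟩

theorem baer [IsNoetherianRing A] (hE : ZeroInjective A E) : Module.Baer A E := by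
  intro I g
  have : Module.FinitePresentation A I := Module.finitePresentation_of_finite A I
  obtain ⟨g', hg'⟩ := hE.exists_extension I.injective_subtype g
  exact ⟨g', fun x hx ↦ LinearMap.congr_fun hg' ⟨x, hx⟩⟩

end ZeroInjective

theorem injective_iff_zeroInjective_general {A : Type u} [Ring A] [IsNoetherianRing A]
    [Small.{v} A] {E : Type v} [AddCommGroup E] [Module A E] :
    Module.Injective A E ↔ ZeroInjective A E :=
  Module.Baer.iff_injective.symm.trans ⟨zeroInjective_of_baer, ZeroInjective.baer⟩

end Injectivity

/-- Over the Noetherian ring `A`, the left `A`-module `E'` is injective if and only if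
it is `0`-injective, i.e. for every exact sequence
`A^{1×k₁} →(•P₁) A^{1×k₂} →(•P₂) A^{1×k₃}`, the sequence
`(E')^{k₃} →(P₂•) (E')^{k₂} →(P₁•) (E')^{k₁}` obtained by applying `Hom_A(-, E')`
is exact. -/
theorem injective_iff_zeroInjective
    {𝕜 : Type} [RCLike 𝕜] {A : Type} [Ring A] [IsDomain A] [Algebra 𝕜 A]
    [IsNoetherianRing A] [IsNoetherianRing Aᵐᵒᵖ]
    (E' : Type) [AddCommGroup E'] [Module 𝕜 E']
    [Module A E'] [IsScalarTower 𝕜 A E'] [SMulCommClass 𝕜 A E']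
    :
    Module.Injective A E' ↔
      ∀ (k₁ k₂ k₃ : ℕ) (P₁ : Matrix (Fin k₁) (Fin k₂) A) (P₂ : Matrix (Fin k₂) (Fin k₃) A),
        Function.Exact (rmulA P₁) (rmulA P₂) →
        Function.Exact (lmulE' (E' := E') P₂) (lmulE' (E' := E') P₁) :=
  injective_iff_zeroInjective_general
end

section
/- Let P_1 ∈ A^{k_1×k_2} and P_2 ∈ A^{k_2×k_3}. If the sequence E^{1×k_1} →(•P_1) E^{1×k_2} →(•P_2) E^{1×k_3} is exact (i.e., im_E(•P_1) = ker_E(•P_2)), then the σ((E')^{k_2}, E^{1×k_2})-closure of the image of P_2• : (E')^{k_3} → (E')^{k_2} equals the kernel of P_1• : (E')^{k_2} → (E')^{k_1}. -/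
/-- The weak topology `σ(E^{1×k}, (E')^k)` on `E^{1×k}` determined by the componentwise
extension `⟨x, x'⟩ = ∑ i, ⟨x i, x' i⟩` of the duality bracket `B` to `E^{1×k} × (E')^k`. -/
noncomputable def sigmaRow {𝕜 E E' : Type*} [RCLike 𝕜] [AddCommGroup E] [Module 𝕜 E]
    [AddCommGroup E'] [Module 𝕜 E'] (B : E →ₗ[𝕜] E' →ₗ[𝕜] 𝕜) (k : ℕ) :
    TopologicalSpace (Fin k → E) :=
  weakTopology fun (x : Fin k → E) (x' : Fin k → E') => ∑ i, B (x i) (x' i)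

/-- The weak topology `σ((E')^k, E^{1×k})` on `(E')^k` determined by the componentwise
extension `⟨x, x'⟩ = ∑ i, ⟨x i, x' i⟩` of the duality bracket `B` to `E^{1×k} × (E')^k`. -/
noncomputable def sigmaCol {𝕜 E E' : Type*} [RCLike 𝕜] [AddCommGroup E] [Module 𝕜 E]
    [AddCommGroup E'] [Module 𝕜 E'] (B : E →ₗ[𝕜] E' →ₗ[𝕜] 𝕜) (k : ℕ) :
    TopologicalSpace (Fin k → E') :=
  weakTopology fun (x' : Fin k → E') (x : Fin k → E) => ∑ i, B (x i) (x' i)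

/-!
The closure of a subspace for a weak topology is its biorthogonal: finitely many functionals
`⟨x, -⟩` cannot tell a vector of the biorthogonal from the subspace, because a linear form on the
finite-dimensional space of their values that separated the two would itself pull back to some
`⟨x, -⟩`. Since `P₂•` is the transpose of `•P₂`, the orthogonal of `im (P₂•)` is `ker (•P₂)`, which
is `im (•P₁)` by exactness, and the orthogonal of `im (•P₁)` is `ker (P₁•)`.
-/

open Topology

section WeakTopology

theorem continuous_weakTopology_eval {𝕜 X Y : Type*} [TopologicalSpace 𝕜] (B : X → Y → 𝕜) (y : Y) :
    Continuous[weakTopology B, _] fun x => B x y :=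
  let _ : TopologicalSpace X := weakTopology B
  (continuous_apply y).comp (continuous_induced_dom (f := B))

theorem mem_closure_weakTopology_of_forall_finset {𝕜 X Y : Type*} [TopologicalSpace 𝕜]
    {B : X → Y → 𝕜} {s : Set X} {x : X}
    (h : ∀ I : Finset Y, ∃ z ∈ s, ∀ y ∈ I, B z y = B x y) :
    x ∈ closure[weakTopology B] s := by
  rw [weakTopology, closure_induced, mem_closure_iff]
  intro o ho hxo
  obtain ⟨I, U, hU, hUo⟩ := isOpen_pi_iff.1 ho _ hxo
  obtain ⟨z, hzs, hz⟩ := h I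
  refine ⟨B z, hUo fun y hy => ?_, Set.mem_image_of_mem B hzs⟩
  rw [hz y hy]
  exact (hU y hy).2

theorem exists_apply_eq_comp_pi {R F F' : Type*} [CommSemiring R] [AddCommMonoid F] [Module R F]
    [AddCommMonoid F'] [Module R F'] (B : F →ₗ[R] F' →ₗ[R] R) {ι : Type*} [Finite ι] (v : ι → F)
    (f : (ι → R) →ₗ[R] R) : ∃ x : F, B x = f ∘ₗ LinearMap.pi fun i => B (v i) := by
  classical
  cases nonempty_fintype ι
  refine ⟨∑ i, f (fun j => if i = j then 1 else 0) • v i, LinearMap.ext fun y => ?_⟩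
  rw [LinearMap.comp_apply, LinearMap.pi_apply_eq_sum_univ f]
  simp [mul_comm]

theorem isClosed_weakTopology_orthogonalBilin {R F F' : Type*} [CommSemiring R]
    [TopologicalSpace R] [T1Space R] [AddCommMonoid F] [Module R F] [AddCommMonoid F'] [Module R F']
    (B : F →ₗ[R] F' →ₗ[R] R) (T : Submodule R F) :
    IsClosed[weakTopology fun y x => B x y] (T.orthogonalBilin B : Set F') := by
  let _ : TopologicalSpace F' := weakTopology fun y x => B x y
  have hset : (T.orthogonalBilin B : Set F') = ⋂ x ∈ T, B x ⁻¹' {0} := by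
    ext y
    simp
  rw [hset]
  exact isClosed_biInter fun x _ =>
    isClosed_singleton.preimage (continuous_weakTopology_eval (fun y x => B x y) x)

variable {𝕜 F F' : Type*} [Field 𝕜] [AddCommMonoid F] [Module 𝕜 F] [AddCommMonoid F'] [Module 𝕜 F']

theorem exists_mem_forall_eq_of_mem_biorthogonal (B : F →ₗ[𝕜] F' →ₗ[𝕜] 𝕜) {S : Submodule 𝕜 F'}
    {y : F'} (hy : y ∈ (S.orthogonalBilin B.flip).orthogonalBilin B) (I : Finset F) :
    ∃ z ∈ S, ∀ x ∈ I, B x z = B x y := by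
  let L : F' →ₗ[𝕜] (I → 𝕜) := LinearMap.pi fun x => B x
  suffices hmem : L y ∈ S.map L by
    obtain ⟨z, hzS, hz⟩ := hmem
    exact ⟨z, hzS, fun x hx => congrFun hz ⟨x, hx⟩⟩
  by_contra hnot
  obtain ⟨f, hfy, hfS⟩ := Submodule.exists_le_ker_of_notMem hnot
  obtain ⟨x, hx⟩ : ∃ x : F, B x = f ∘ₗ L := exists_apply_eq_comp_pi B _ f
  have hxS : x ∈ S.orthogonalBilin B.flip := fun z hz => by
    rw [LinearMap.flip_apply, hx]
    exact hfS (Submodule.mem_map_of_mem hz)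
  have hxy : B x y = 0 := hy x hxS
  exact hfy (by rwa [hx] at hxy)

theorem closure_weakTopology_eq_biorthogonal [TopologicalSpace 𝕜] [T1Space 𝕜]
    (B : F →ₗ[𝕜] F' →ₗ[𝕜] 𝕜) (S : Submodule 𝕜 F') :
    closure[weakTopology fun y x => B x y] (S : Set F') =
      (S.orthogonalBilin B.flip).orthogonalBilin B := by
  let _ : TopologicalSpace F' := weakTopology fun y x => B x y
  refine (closure_minimal (fun z hz x hx => hx z hz)
    (isClosed_weakTopology_orthogonalBilin B _)).antisymm fun y hy => ?_
  exact mem_closure_weakTopology_of_forall_finset (exists_mem_forall_eq_of_mem_biorthogonal B hy)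

end WeakTopology

section Transpose

variable {R F F' G G' : Type*} [CommSemiring R]
  [AddCommMonoid F] [Module R F] [AddCommMonoid F'] [Module R F']
  [AddCommMonoid G] [Module R G] [AddCommMonoid G'] [Module R G']
  {B : F →ₗ[R] F' →ₗ[R] R} {C : G →ₗ[R] G' →ₗ[R] R}

theorem mem_orthogonalBilin_range_transpose_iff (hC : C.SeparatingLeft)
    {f : F → G} {f' : G' →ₗ[R] F'} (hf : ∀ x y, C (f x) y = B x (f' y)) {x : F} :
    x ∈ (LinearMap.range f').orthogonalBilin B.flip ↔ f x = 0 := by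
  simp only [Submodule.mem_orthogonalBilin_iff, LinearMap.mem_range, forall_exists_index,
    forall_apply_eq_imp_iff, LinearMap.flip_apply, ← hf]
  exact ⟨hC (f x), fun h y => by rw [h, map_zero, LinearMap.zero_apply]⟩

theorem transpose_eq_zero_iff (hB : B.SeparatingRight)
    {f : F → G} {f' : G' → F'} (hf : ∀ x y, C (f x) y = B x (f' y)) {y : G'} :
    f' y = 0 ↔ ∀ x, C (f x) y = 0 := by
  simp only [hf]
  exact ⟨fun h x => by rw [h, map_zero], hB (f' y)⟩

theorem closure_range_transpose_eq_ker_of_exact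
    {𝕜 F₁ F₂ F₃ F₁' F₂' F₃' : Type*} [Field 𝕜] [TopologicalSpace 𝕜] [T1Space 𝕜]
    [AddCommMonoid F₁] [Module 𝕜 F₁] [AddCommMonoid F₁'] [Module 𝕜 F₁']
    [AddCommMonoid F₂] [Module 𝕜 F₂] [AddCommMonoid F₂'] [Module 𝕜 F₂']
    [AddCommMonoid F₃] [Module 𝕜 F₃] [AddCommMonoid F₃'] [Module 𝕜 F₃']
    {B₁ : F₁ →ₗ[𝕜] F₁' →ₗ[𝕜] 𝕜} {B₂ : F₂ →ₗ[𝕜] F₂' →ₗ[𝕜] 𝕜} {B₃ : F₃ →ₗ[𝕜] F₃' →ₗ[𝕜] 𝕜}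
    (hB₁ : B₁.SeparatingRight) (hB₃ : B₃.SeparatingLeft)
    {f : F₁ → F₂} {f' : F₂' → F₁'} (hf : ∀ x y, B₂ (f x) y = B₁ x (f' y))
    {g : F₂ → F₃} {g' : F₃' →ₗ[𝕜] F₂'} (hg : ∀ x y, B₃ (g x) y = B₂ x (g' y))
    (hfg : Function.Exact f g) :
    closure[weakTopology fun y x => B₂ x y] (Set.range g') = {y | f' y = 0} := by
  rw [← LinearMap.coe_range, closure_weakTopology_eq_biorthogonal]
  ext y
  calc y ∈ ((LinearMap.range g').orthogonalBilin B₂.flip).orthogonalBilin B₂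
    _ ↔ ∀ x, g x = 0 → B₂ x y = 0 := by
      simp only [Submodule.mem_orthogonalBilin_iff (B := B₂),
        mem_orthogonalBilin_range_transpose_iff hB₃ hg]
    _ ↔ ∀ x, B₂ (f x) y = 0 := by simp only [hfg _, Set.forall_mem_range]
    _ ↔ f' y = 0 := (transpose_eq_zero_iff hB₁ hf).symm

end Transpose

section PiPairing

variable {R E E' : Type*} [CommSemiring R] [AddCommMonoid E] [Module R E]
  [AddCommMonoid E'] [Module R E']

/-- The componentwise extension `⟨x, x'⟩ = ∑ i, ⟨x i, x' i⟩` of a bilinear pairing to tuples,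
through which the bracket on `E^{1×k} × (E')^k` is a pairing of the same kind as the one on
`E × E'`. -/
def piPairing (B : E →ₗ[R] E' →ₗ[R] R) (ι : Type*) [Fintype ι] :
    (ι → E) →ₗ[R] (ι → E') →ₗ[R] R :=
  LinearMap.mk₂ R (fun x x' => ∑ i, B (x i) (x' i))
    (by simp [Finset.sum_add_distrib]) (by simp [Finset.mul_sum])
    (by simp [Finset.sum_add_distrib]) (by simp [Finset.mul_sum])

theorem piPairing_apply (B : E →ₗ[R] E' →ₗ[R] R) {ι : Type*} [Fintype ι] (x : ι → E) (x' : ι → E') :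
    piPairing B ι x x' = ∑ i, B (x i) (x' i) :=
  rfl

theorem piPairing_flip (B : E →ₗ[R] E' →ₗ[R] R) (ι : Type*) [Fintype ι] :
    (piPairing B ι).flip = piPairing B.flip ι :=
  rfl

theorem separatingLeft_piPairing {B : E →ₗ[R] E' →ₗ[R] R} (hB : B.SeparatingLeft)
    (ι : Type*) [Fintype ι] : (piPairing B ι).SeparatingLeft := by
  classical
  refine fun x hx => funext fun i => hB (x i) fun z => ?_
  have hsum : ∑ j, B (x j) (Pi.single (M := fun _ => E') i z j) = 0 := hx (Pi.single i z)
  rwa [Fintype.sum_eq_single i fun j hj => by rw [Pi.single_eq_of_ne hj, map_zero],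
    Pi.single_eq_same] at hsum

theorem separatingRight_piPairing {B : E →ₗ[R] E' →ₗ[R] R} (hB : B.SeparatingRight)
    (ι : Type*) [Fintype ι] : (piPairing B ι).SeparatingRight := by
  rw [← LinearMap.flip_separatingLeft, piPairing_flip]
  exact separatingLeft_piPairing (LinearMap.flip_separatingLeft.2 hB) ι

end PiPairing

section Matrix

variable {A E' : Type*} [Ring A] [AddCommGroup E'] [Module A E'] {q r : ℕ}

theorem isLinearMap_lmulE' {R : Type*} [Semiring R] [Module R E']
    [SMulCommClass R A E'] (P : Matrix (Fin q) (Fin r) A) :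
    IsLinearMap R (lmulE' (E' := E') P) where
  map_add x y := by
    ext i
    simp [lmulE', Finset.sum_add_distrib]
  map_smul c x := by
    ext i
    simp [lmulE', Finset.smul_sum, smul_comm c]

theorem piPairing_rmulE_eq_piPairing_lmulE' {R E : Type*} [CommSemiring R] [Module R E']
    [AddCommGroup E] [Module R E] [Module Aᵐᵒᵖ E] {B : E →ₗ[R] E' →ₗ[R] R}
    (hcomp : ∀ (x : E) (a : A) (x' : E'), B (MulOpposite.op a • x) x' = B x (a • x'))
    (P : Matrix (Fin q) (Fin r) A) (x : Fin q → E) (x' : Fin r → E') :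
    piPairing B (Fin r) (rmulE P x) x' = piPairing B (Fin q) x (lmulE' P x') := by
  simp only [piPairing_apply, rmulE, lmulE', map_sum, LinearMap.sum_apply, hcomp]
  exact Finset.sum_comm

end Matrix

theorem closure_image_eq_ker_of_exact_general
    {𝕜 : Type*} [Field 𝕜] [TopologicalSpace 𝕜] [T1Space 𝕜] {A : Type*} [Ring A]
    {E E' : Type*} [AddCommGroup E] [Module 𝕜 E] [AddCommGroup E'] [Module 𝕜 E']
    [Module A E'] [SMulCommClass 𝕜 A E'] [Module Aᵐᵒᵖ E]
    {B : E →ₗ[𝕜] E' →ₗ[𝕜] 𝕜} (hB : B.Nondegenerate)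
    (hcomp : ∀ (x : E) (a : A) (x' : E'), B (MulOpposite.op a • x) x' = B x (a • x'))
    {k₁ k₂ k₃ : ℕ} (P₁ : Matrix (Fin k₁) (Fin k₂) A) (P₂ : Matrix (Fin k₂) (Fin k₃) A)
    (hexact : Function.Exact (rmulE (E := E) P₁) (rmulE (E := E) P₂)) :
    closure[weakTopology fun (x' : Fin k₂ → E') (x : Fin k₂ → E) => ∑ i, B (x i) (x' i)]
        (Set.range (lmulE' (E' := E') P₂)) =
      {x' : Fin k₂ → E' | lmulE' P₁ x' = 0} :=
  closure_range_transpose_eq_ker_of_exact (g' := (isLinearMap_lmulE' P₂).mk' _)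
    (separatingRight_piPairing hB.2 _) (separatingLeft_piPairing hB.1 _)
    (piPairing_rmulE_eq_piPairing_lmulE' hcomp P₁) (piPairing_rmulE_eq_piPairing_lmulE' hcomp P₂)
    hexact

/-- If `E^{1×k₁} →(•P₁) E^{1×k₂} →(•P₂) E^{1×k₃}` is exact, then the
`σ((E')^{k₂}, E^{1×k₂})`-closure of `im_{E'}(P₂•)` equals `ker_{E'}(P₁•)`. -/
theorem closure_image_eq_ker_of_exact
    {𝕜 : Type} [RCLike 𝕜] {A : Type} [Ring A] [IsDomain A] [Algebra 𝕜 A]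
    [IsNoetherianRing A] [IsNoetherianRing Aᵐᵒᵖ]
    {E E' : Type} [AddCommGroup E] [Module 𝕜 E] [AddCommGroup E'] [Module 𝕜 E']
    [Module A E'] [IsScalarTower 𝕜 A E'] [SMulCommClass 𝕜 A E']
    [Module Aᵐᵒᵖ E] [IsScalarTower 𝕜 Aᵐᵒᵖ E] [SMulCommClass 𝕜 Aᵐᵒᵖ E]
    (B : E →ₗ[𝕜] E' →ₗ[𝕜] 𝕜)
    (hB₁ : ∀ x : E, (∀ x' : E', B x x' = 0) → x = 0)
    (hB₂ : ∀ x' : E', (∀ x : E, B x x' = 0) → x' = 0)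
    (hsemi : ∀ a : A, @Continuous E' E' (weakTopology fun x' x => B x x')
      (weakTopology fun x' x => B x x') (fun x' => a • x'))
    (hcomp : ∀ (x : E) (a : A) (x' : E'), B (MulOpposite.op a • x) x' = B x (a • x'))
    (k₁ k₂ k₃ : ℕ) (P₁ : Matrix (Fin k₁) (Fin k₂) A) (P₂ : Matrix (Fin k₂) (Fin k₃) A)
    (hexact : Function.Exact (rmulE (E := E) P₁) (rmulE (E := E) P₂)) :
    @closure _ (sigmaCol B k₂) (Set.range (lmulE' (E' := E') P₂)) =
      {x' : Fin k₂ → E' | lmulE' P₁ x' = 0} :=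
  closure_image_eq_ker_of_exact_general ⟨hB₁, hB₂⟩ hcomp P₁ P₂ hexact
end

section
/- Assume the left A-module E' is injective. Then for every matrix P_1 ∈ A^{k_1×k_2}, the image of the map P_1• : (E')^{k_2} → (E')^{k_1} is closed in (E')^{k_1} for the weak topology σ((E')^{k_1}, E^{1×k_1}). -/
/-!
The range of `P •` is the orthogonal of the kernel of its transpose `• P`, so it is weakly closed.
That the range lies in this orthogonal is the transposition identity. Conversely, let `y` be
orthogonal to `ker (• P)`. If `a P = 0` with `a` a row over `A`, then every row `x a`, with `x` in
`E`, lies in `ker (• P)`; hence `⟨x, a y⟩ = ⟨x a, y⟩ = 0` for all `x`, and `a y = 0`. So `a ↦ a y`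
vanishes on the kernel of `a ↦ a P`, and injectivity of `E'` factors it as `a ↦ h (a P)` for a
linear map `h`. The values of `h` on the standard basis solve `P z = y`.
-/

section MatrixAction

variable {A : Type*} [Ring A]

-- `Module.Injective A Q` only quantifies over modules in the universe of `Q`; `Module.Baer` has no
-- such restriction.
theorem exists_comp_eq_of_baer_of_ker_le {X Y Q : Type*} [AddCommGroup X] [AddCommGroup Y]
    [AddCommGroup Q] [Module A X] [Module A Y] [Module A Q] (hQ : Module.Baer A Q)
    (f : X →ₗ[A] Y) (g : X →ₗ[A] Q) (hfg : LinearMap.ker f ≤ LinearMap.ker g) :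
    ∃ h : Y →ₗ[A] Q, h ∘ₗ f = g := by
  have hinj : Function.Injective ((LinearMap.ker f).liftQ f le_rfl) :=
    LinearMap.ker_eq_bot.mp (Submodule.ker_liftQ_eq_bot _ _ _ le_rfl)
  obtain ⟨h, hh⟩ := hQ.extension_property _ hinj ((LinearMap.ker f).liftQ g hfg)
  refine ⟨h, ?_⟩
  rw [← (LinearMap.ker f).liftQ_mkQ f le_rfl, ← LinearMap.comp_assoc, hh, Submodule.liftQ_mkQ]

variable {q r : ℕ} (P : Matrix (Fin q) (Fin r) A)

theorem lmulE'_map_single {N : Type*} [AddCommGroup N] [Module A N]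
    (h : (Fin r → A) →ₗ[A] N) :
    lmulE' P (fun j => h (Pi.single j 1)) = fun i => h (P i) := by
  funext i
  conv_rhs => rw [pi_eq_sum_univ' (P i)]
  simp [lmulE']

theorem exists_lmulE'_eq_of_forall_rmulA {N : Type*} [AddCommGroup N] [Module A N]
    (hN : Module.Baer A N) {y : Fin q → N} (hy : ∀ a, rmulA P a = 0 → ∑ i, a i • y i = 0) :
    ∃ z, lmulE' P z = y := by
  obtain ⟨h, hh⟩ :=
    exists_comp_eq_of_baer_of_ker_le hN P.vecMulLinear (Fintype.linearCombination A y) hy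
  refine ⟨fun j => h (Pi.single j 1), ?_⟩
  rw [lmulE'_map_single]
  funext i
  simpa [Matrix.row] using LinearMap.congr_fun hh (Pi.single i 1)

theorem rmulE_op_smul {E : Type*} [AddCommGroup E] [Module Aᵐᵒᵖ E] (a : Fin q → A) (x : E) :
    rmulE P (fun i => MulOpposite.op (a i) • x) =
      fun j => MulOpposite.op (rmulA P a j) • x := by
  funext j
  simp [rmulE, rmulA, smul_smul, ← MulOpposite.op_mul, ← Finset.sum_smul, ← Finset.op_sum]

end MatrixAction

section Pairing

variable {A E E' M : Type*} [Ring A] [AddCommGroup E] [AddCommGroup E'] [AddCommMonoid M]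
  [Module Aᵐᵒᵖ E] [Module A E'] {B : E →+ E' →+ M} {q r : ℕ}

theorem sum_pairing_lmulE'
    (hB : ∀ (x : E) (a : A) (x' : E'), B (MulOpposite.op a • x) x' = B x (a • x'))
    (P : Matrix (Fin q) (Fin r) A) (ξ : Fin q → E) (z : Fin r → E') :
    ∑ i, B (ξ i) (lmulE' P z i) = ∑ j, B (rmulE P ξ j) (z j) := by
  simp only [lmulE', rmulE, map_sum, AddMonoidHom.finsetSum_apply, hB]
  exact Finset.sum_comm

theorem range_lmulE'_eq_orthogonal_ker_rmulE
    (hB : ∀ (x : E) (a : A) (x' : E'), B (MulOpposite.op a • x) x' = B x (a • x'))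
    (hnondeg : ∀ x', (∀ x, B x x' = 0) → x' = 0) (hE' : Module.Baer A E')
    (P : Matrix (Fin q) (Fin r) A) :
    Set.range (lmulE' (E' := E') P) =
      {y | ∀ ξ : Fin q → E, rmulE P ξ = 0 → ∑ i, B (ξ i) (y i) = 0} := by
  apply Set.Subset.antisymm
  · rintro _ ⟨z, rfl⟩ ξ hξ
    simp [sum_pairing_lmulE' hB, hξ]
  · intro y hy
    refine exists_lmulE'_eq_of_forall_rmulA P hE' fun a ha => hnondeg _ fun x => ?_
    have hker : rmulE P (fun i => MulOpposite.op (a i) • x) = 0 := by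
      rw [rmulE_op_smul, ha]
      funext j
      simp
    simpa [hB] using hy _ hker

end Pairing

theorem isClosed_orthogonal_weakTopology {M X Y : Type*} [TopologicalSpace M] [T1Space M] [Zero M]
    (B : X → Y → M) (S : Set Y) :
    @IsClosed X (weakTopology B) {x | ∀ y ∈ S, B x y = 0} := by
  let := weakTopology B
  have hcont : Continuous B := continuous_induced_dom
  simp only [Set.ofPred_forall]
  exact isClosed_biInter fun y _ => isClosed_singleton.preimage ((continuous_apply y).comp hcont)

theorem image_closed_of_injective_general
    {A E E' M : Type*} [Ring A] [AddCommGroup E] [AddCommGroup E'] [AddCommMonoid M]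
    [TopologicalSpace M] [T1Space M] [Module Aᵐᵒᵖ E] [Module A E'] (B : E →+ E' →+ M)
    (hB : ∀ (x : E) (a : A) (x' : E'), B (MulOpposite.op a • x) x' = B x (a • x'))
    (hnondeg : ∀ x', (∀ x, B x x' = 0) → x' = 0)
    (hE' : Module.Baer A E') {q r : ℕ} (P : Matrix (Fin q) (Fin r) A) :
    @IsClosed _ (weakTopology fun (y : Fin q → E') (ξ : Fin q → E) => ∑ i, B (ξ i) (y i))
      (Set.range (lmulE' (E' := E') P)) := by
  rw [range_lmulE'_eq_orthogonal_ker_rmulE hB hnondeg hE' P]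
  exact isClosed_orthogonal_weakTopology _ {ξ : Fin q → E | rmulE P ξ = 0}

/-- If the left `A`-module `E'` is injective, then for every matrix `P₁ ∈ A^{k₁×k₂}`
the image of `P₁• : (E')^{k₂} → (E')^{k₁}` is closed for the weak topology
`σ((E')^{k₁}, E^{1×k₁})`. -/
theorem image_closed_of_injective
    {𝕜 : Type} [RCLike 𝕜] {A : Type} [Ring A] [IsDomain A] [Algebra 𝕜 A]
    [IsNoetherianRing A] [IsNoetherianRing Aᵐᵒᵖ]
    {E E' : Type} [AddCommGroup E] [Module 𝕜 E] [AddCommGroup E'] [Module 𝕜 E']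
    [Module A E'] [IsScalarTower 𝕜 A E'] [SMulCommClass 𝕜 A E']
    [Module Aᵐᵒᵖ E] [IsScalarTower 𝕜 Aᵐᵒᵖ E] [SMulCommClass 𝕜 Aᵐᵒᵖ E]
    (B : E →ₗ[𝕜] E' →ₗ[𝕜] 𝕜)
    (hB₁ : ∀ x : E, (∀ x' : E', B x x' = 0) → x = 0)
    (hB₂ : ∀ x' : E', (∀ x : E, B x x' = 0) → x' = 0)
    (hsemi : ∀ a : A, @Continuous E' E' (weakTopology fun x' x => B x x')
      (weakTopology fun x' x => B x x') (fun x' => a • x'))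
    (hcomp : ∀ (x : E) (a : A) (x' : E'), B (MulOpposite.op a • x) x' = B x (a • x'))
    (hinj : Module.Injective A E') :
    ∀ (k₁ k₂ : ℕ) (P₁ : Matrix (Fin k₁) (Fin k₂) A),
      @IsClosed _ (sigmaCol B k₁) (Set.range (lmulE' (E' := E') P₁)) := by
  intro _ _ P₁
  exact image_closed_of_injective_general (LinearMap.toAddMonoidHom'.comp B.toAddMonoidHom)
    hcomp hB₂ (Module.Baer.of_injective hinj) P₁
end
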